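/- For any autoregressive (tree-structured, deterministic-transition) MDP with horizon H and policy π, the sum over steps h of the expected (over states s_h from the state distribution of π at step h) variance over actions a ∼ π(·|s_h) of the action-value function Q_π(s_h, a) equals the expected (over initial prompts x ∼ ρ) variance of the total cumulative reward of a trajectory sampled from π conditioned on x. That is, Σ_{h=1}^H E_{s_h ∼ d_h^π}[Var_{a∼π(·|s_h)}[Q_π(s_h,a)]] = E_{x∼ρ}[Var_{τ∼π(·|x)}[r(τ)]]. -/

import Mathlib

open Finset

/-- Probability, under policy `π` and prompt `x`, of observing the token prefix `p`
in an autoregressive MDP (states are prompt-plus-token-prefixes, transitions are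
deterministic concatenations). -/
noncomputable def prefProb {X A : Type*} [Inhabited A]
    (π : X → List A → A → ℝ) (x : X) (p : List A) : ℝ :=
  ∏ i ∈ Finset.range p.length, π x (p.take i) (p.getD i default)

/-- Action-value function `Q_π` of policy `π` with per-step reward `r`, at prompt `x`,
prefix `p` and action `a`, when `n` further steps remain after the current one:
the expected cumulative reward-to-go. -/
noncomputable def Qfun {X A : Type*} [Fintype A]
    (π : X → List A → A → ℝ) (r : X → List A → A → ℝ) (x : X) :
    ℕ → List A → A → ℝ
  | 0, p, a => r x p a
  | n + 1, p, a =>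
      r x p a + ∑ a' : A, π x (p ++ [a]) a' * Qfun π r x n (p ++ [a]) a'

/-- Expectation of `f` over the length-`h` prefixes sampled from `π` at prompt `x`. -/
noncomputable def prefExp {X A : Type*} [Fintype A] [Inhabited A]
    (π : X → List A → A → ℝ) (x : X) (h : ℕ) (f : List A → ℝ) : ℝ :=
  ∑ p : Fin h → A, prefProb π x (List.ofFn p) * f (List.ofFn p)

/-- Cumulative reward collected along the prefix `p`. -/
noncomputable def cumReward {X A : Type*} [Inhabited A]
    (r : X → List A → A → ℝ) (x : X) (p : List A) : ℝ :=
  ∑ i ∈ Finset.range p.length, r x (p.take i) (p.getD i default)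

/-- State value: the expected reward-to-go from the prefix `p` with `n` steps remaining. -/
noncomputable def stateValue {X A : Type*} [Fintype A]
    (π : X → List A → A → ℝ) (r : X → List A → A → ℝ) (x : X) : ℕ → List A → ℝ
  | 0, _ => 0
  | n + 1, p => ∑ a : A, π x p a * Qfun π r x n p a

theorem Qfun_eq_add_stateValue {X A : Type*} [Fintype A]
    (π r : X → List A → A → ℝ) (x : X) (n : ℕ) (p : List A) (a : A) :
    Qfun π r x n p a = r x p a + stateValue π r x n (p ++ [a]) := by
  cases n <;> simp [Qfun, stateValue]

section

variable {X A : Type*} [Inhabited A]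

theorem prefProb_append_singleton (π : X → List A → A → ℝ) (x : X) (p : List A) (a : A) :
    prefProb π x (p ++ [a]) = prefProb π x p * π x p a := by
  simp only [prefProb, List.length_append, List.length_singleton, Finset.prod_range_succ]
  congr 1
  · refine Finset.prod_congr rfl fun i hi => ?_
    have hi := Finset.mem_range.1 hi
    rw [List.take_append_of_le_length hi.le, List.getD_append _ _ _ _ hi]
  · simp

theorem cumReward_append_singleton (r : X → List A → A → ℝ) (x : X) (p : List A) (a : A) :
    cumReward r x (p ++ [a]) = cumReward r x p + r x p a := by
  simp only [cumReward, List.length_append, List.length_singleton, Finset.sum_range_succ]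
  congr 1
  · refine Finset.sum_congr rfl fun i hi => ?_
    have hi := Finset.mem_range.1 hi
    rw [List.take_append_of_le_length hi.le, List.getD_append _ _ _ _ hi]
  · simp

theorem cumReward_ofFn (r : X → List A → A → ℝ) (x : X) {n : ℕ} (τ : Fin n → A) :
    cumReward r x (List.ofFn τ) = ∑ i : Fin n, r x ((List.ofFn τ).take i.1) (τ i) := by
  rw [cumReward, List.length_ofFn, Finset.sum_range]
  simp

variable [Fintype A]

theorem prefExp_zero (π : X → List A → A → ℝ) (x : X) (f : List A → ℝ) :
    prefExp π x 0 f = f [] := by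
  simp [prefExp, prefProb]

theorem prefExp_succ (π : X → List A → A → ℝ) (x : X) (h : ℕ) (f : List A → ℝ) :
    prefExp π x (h + 1) f = prefExp π x h fun p => ∑ a, π x p a * f (p ++ [a]) := by
  have key (q : A × (Fin h → A)) :
      List.ofFn (Fin.snocEquiv (fun _ => A) q) = List.ofFn q.2 ++ [q.1] := by
    rw [List.ofFn_succ', List.concat_eq_append]
    simp [Fin.snocEquiv]
  rw [prefExp, ← (Fin.snocEquiv fun _ : Fin (h + 1) => A).sum_comp, Fintype.sum_prod_type_right]
  simp only [key, prefProb_append_singleton, prefExp, Finset.mul_sum, mul_assoc]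

theorem prefExp_add (π : X → List A → A → ℝ) (x : X) (h : ℕ) (f g : List A → ℝ) :
    (prefExp π x h fun p => f p + g p) = prefExp π x h f + prefExp π x h g := by
  simp only [prefExp, mul_add, Finset.sum_add_distrib]

/-- The conditional expected return is a martingale along the prefix process. -/
theorem prefExp_cumReward_add_stateValue (π r : X → List A → A → ℝ)
    (hπ1 : ∀ x p, ∑ a, π x p a = 1) (x : X) (h n : ℕ) :
    (prefExp π x h fun p => cumReward r x p + stateValue π r x n p) =
      stateValue π r x (h + n) [] := by
  induction h generalizing n with
  | zero => simp [prefExp_zero, cumReward]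
  | succ h ih =>
    rw [prefExp_succ, Nat.add_right_comm, Nat.add_assoc, ← ih (n + 1)]
    congr 1
    funext p
    simp only [cumReward_append_singleton, add_assoc, ← Qfun_eq_add_stateValue]
    simp only [mul_add, Finset.sum_add_distrib, ← Finset.sum_mul, hπ1, one_mul, stateValue]

/-- Bias-variance identity for a finite probability distribution. -/
theorem sum_mul_add_sub_sq {ι : Type*} [Fintype ι] (w f : ι → ℝ) (hw : ∑ i, w i = 1) (b c : ℝ) :
    ∑ i, w i * (b + f i - c) ^ 2 =
      (b + ∑ i, w i * f i - c) ^ 2 + ∑ i, w i * (f i - ∑ j, w j * f j) ^ 2 := by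
  set m := ∑ i, w i * f i with hm
  have expand (i : ι) : w i * (b + f i - c) ^ 2 =
      w i * (f i - m) ^ 2 + 2 * (b + m - c) * (w i * f i) +
        w i * ((b + m - c) ^ 2 - 2 * (b + m - c) * m) := by ring
  simp only [expand, Finset.sum_add_distrib, ← Finset.mul_sum, ← Finset.sum_mul, hw, ← hm]
  ring

theorem prefExp_sq_cumReward_add_stateValue_sub (π r : X → List A → A → ℝ)
    (hπ1 : ∀ x p, ∑ a, π x p a = 1) (x : X) (c : ℝ) (h n : ℕ) :
    (prefExp π x h fun p => (cumReward r x p + stateValue π r x n p - c) ^ 2) =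
      (stateValue π r x (h + n) [] - c) ^ 2 +
        ∑ k ∈ Finset.range h, prefExp π x k fun p =>
          ∑ a, π x p a * (Qfun π r x (h + n - 1 - k) p a -
            ∑ a', π x p a' * Qfun π r x (h + n - 1 - k) p a') ^ 2 := by
  induction h generalizing n with
  | zero => simp [prefExp_zero, cumReward]
  | succ h ih =>
    have hn : h + (n + 1) - 1 - h = n := by omega
    rw [prefExp_succ, Nat.add_right_comm, Nat.add_assoc, Finset.sum_range_succ, ← add_assoc,
      ← ih (n + 1), ← prefExp_add, hn]
    congr 1
    funext p
    simp only [cumReward_append_singleton, add_assoc, ← Qfun_eq_add_stateValue]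
    exact sum_mul_add_sub_sq _ _ (hπ1 x p) _ _

end

/-- Variance decomposition in autoregressive MDPs: the sum over steps `h` of the
expected (over the step-`h` state distribution of `π`) variance over actions of
`Q_π` equals the expected (over prompts `x ∼ ρ`) variance of the total cumulative
reward of a trajectory sampled from `π` given `x`. -/
theorem stmt_5 {X A : Type*} [Fintype X] [Fintype A] [Inhabited A]
    (H : ℕ) (hH : 0 < H)
    (ρ : X → ℝ) (hρ0 : ∀ x, 0 ≤ ρ x) (hρ1 : ∑ x, ρ x = 1)
    (π : X → List A → A → ℝ)
    (hπ0 : ∀ x p a, 0 ≤ π x p a) (hπ1 : ∀ x p, ∑ a, π x p a = 1)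
    (r : X → List A → A → ℝ) :
    (∑ h ∈ Finset.range H, ∑ x : X, ρ x *
        ∑ p : Fin h → A, prefProb π x (List.ofFn p) *
          (∑ a : A, π x (List.ofFn p) a *
            (Qfun π r x (H - 1 - h) (List.ofFn p) a
              - ∑ a' : A, π x (List.ofFn p) a' *
                  Qfun π r x (H - 1 - h) (List.ofFn p) a') ^ 2))
      = ∑ x : X, ρ x *
          ∑ τ : Fin H → A, prefProb π x (List.ofFn τ) *
            ((∑ i : Fin H, r x ((List.ofFn τ).take i.1) (τ i))
              - ∑ τ' : Fin H → A, prefProb π x (List.ofFn τ') *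
                  ∑ i : Fin H, r x ((List.ofFn τ').take i.1) (τ' i)) ^ 2 := by
  rw [Finset.sum_comm]
  refine Finset.sum_congr rfl fun x _ => ?_
  rw [← Finset.mul_sum]
  simp only [← cumReward_ofFn]
  have hmean := prefExp_cumReward_add_stateValue π r hπ1 x H 0
  have hvar := prefExp_sq_cumReward_add_stateValue_sub π r hπ1 x (stateValue π r x H []) H 0
  simp only [stateValue, add_zero, sub_self, ne_eq, OfNat.ofNat_ne_zero, not_false_eq_true,
    zero_pow, zero_add] at hmean hvar
  rw [← hmean] at hvar
  exact congrArg (ρ x * ·) hvar.symm
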